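/- Let R be a Koszul algebra over a field k and let M be an indecomposable linear R-module of infinite projective dimension. Consider the statements: (1) M is periodic; (2) there exist n ≥ 1 and η ∈ Δ_M^n such that some lifting of η (with entries in R_0) is an isomorphism; (3) there exist n ≥ 1 and η ∈ Δ_M^n such that some lifting of η is a monomorphism; (4) M is eventually periodic. Then (1) implies (2), (2) and (3) are equivalent, and (3) implies (4). Moreover, if R is selfinjective, then (1)–(4) are all equivalent. -/

import Mathlib

/-!
The proof rests on taking *leading components*. A linear map `f` between graded modules has a
degree `s` component `ModuleGrading.comp s f`; for modules generated in a single degree, the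
component carrying generating degree to generating degree is multiplicative
(`GeneratedIn.comp_comp`), so ungraded isomorphisms may be replaced by homogeneous ones, and
lifting and extension problems with homogeneous data have homogeneous solutions.

(1) ⟹ (2): an isomorphism `Ω^n M ≅ M` and its inverse lift to maps between `P^n` and `P^0`. The
leading components of these are mutually inverse, because `ε` and the differentials are injective
on generators (`eq_zero_of_mem_range`), and they continue to a family of liftings.

(2) ⟺ (3) and (3) ⟹ (4): a projective generated in one degree is induced from its generating
piece over the semisimple ring `R₀` (`GeneratedIn.exists_extension`), so a homogeneous map is
injective as soon as it is so on generators. Hence if `l^j` is injective then so is `l^i` for all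
`i ≥ j`, and the finite dimensions of the generating pieces satisfy `D (n + i) ≤ D i`. This forces
`D (n + i) = D i` for large `i`, whence `l^i` is eventually bijective
(`eventually_bijective_lifting`), and two consecutive bijective liftings identify syzygies.

(4) ⟹ (1) for selfinjective `R`: every `P^i` is injective. A degree zero map `P^{p-1} → P^p`
vanishes, as `P^p` has nothing in degree `p - 1`; so a degree zero endomorphism of `P^p`, `p ≥ 1`,
which fixes the boundaries is the identity (`endo_eq_id`). An isomorphism
`Ω^{n+s+1} M ≅ Ω^{s+1} M` extends to maps `F : P^s → P^{n+s}` and `G : P^{n+s} → P^s` with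
`F ∘ G = 1`, and this descends step by step to `P^0` and `P^n`. Thus `Ω^n M` is a nonzero direct
summand of the indecomposable module `M`, hence isomorphic to it.
-/

/-- A grading by `ℤ` on a module `M` over the graded `k`-algebra `R = ⊕ᵢ Rᵢ` (with
grading `𝒜 : ℕ → Submodule k R`): `M = ⊕ⱼ Mⱼ` as `k`-vector spaces, compatibly with the
grading of `R`. -/
structure ModuleGrading (k : Type) [Field k] (R : Type) [Ring R] [Algebra k R]
    (𝒜 : ℕ → Submodule k R)
    (M : Type) [AddCommGroup M] [Module R M] [Module k M] [IsScalarTower k R M] where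
  piece : ℤ → Submodule k M
  internal : DirectSum.IsInternal piece
  smul_mem : ∀ {i : ℕ} {j : ℤ} {r : R} {x : M},
      r ∈ 𝒜 i → x ∈ piece j → r • x ∈ piece ((i : ℤ) + j)

variable (k : Type) [Field k] (R : Type) [Ring R] [Algebra k R]
  (𝒜 : ℕ → Submodule k R)

/-- A linear (graded projective) resolution `⋯ → P¹ → P⁰ → M → 0` of a graded module `M`
over the graded algebra `R`: each `Pⁿ` is a finitely generated graded projective module
generated in degree `n`, and all differentials (and the augmentation) are degree-zero
homomorphisms.  (A graded module `M` generated in degree `0` is a *linear module* when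
such a resolution exists; in particular this resolution is then minimal.) -/
structure LinearResolution (M : Type) [AddCommGroup M] [Module R M] [Module k M]
    [IsScalarTower k R M] (ℳ : ModuleGrading k R 𝒜 M) where
  P : ℕ → Type
  [acg : ∀ n, AddCommGroup (P n)]
  [modR : ∀ n, Module R (P n)]
  [modk : ∀ n, Module k (P n)]
  [tower : ∀ n, IsScalarTower k R (P n)]
  grading : ∀ n, ModuleGrading k R 𝒜 (P n)
  projective : ∀ n, Module.Projective R (P n)
  finite : ∀ n, Module.Finite R (P n)
  /-- `Pⁿ` is generated in degree `n`. -/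
  generated : ∀ n : ℕ, Submodule.span R ((grading n).piece (n : ℤ) : Set (P n)) = ⊤
  vanish : ∀ (n : ℕ) (j : ℤ), j < (n : ℤ) → (grading n).piece j = ⊥
  d : ∀ n, P (n + 1) →ₗ[R] P n
  augment : P 0 →ₗ[R] M
  d_degree : ∀ (n : ℕ) {j : ℤ} {x : P (n + 1)},
      x ∈ (grading (n + 1)).piece j → d n x ∈ (grading n).piece j
  augment_degree : ∀ {j : ℤ} {x : P 0}, x ∈ (grading 0).piece j → augment x ∈ ℳ.piece j
  augment_surjective : Function.Surjective augment
  exact_zero : LinearMap.ker augment = LinearMap.range (d 0)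
  exact_succ : ∀ n, LinearMap.ker (d n) = LinearMap.range (d (n + 1))

attribute [instance] LinearResolution.acg LinearResolution.modR LinearResolution.modk
  LinearResolution.tower

/-- The degree-zero part `R₀ = 𝒜 0` of a graded algebra, as a `k`-subalgebra. -/
def gradeZeroSubalgebra [GradedAlgebra 𝒜] : Subalgebra k R where
  carrier := 𝒜 0
  mul_mem' := fun {a b} ha hb => by simpa using SetLike.mul_mem_graded ha hb
  one_mem' := SetLike.one_mem_graded 𝒜
  add_mem' := fun {a b} ha hb => (𝒜 0).add_mem ha hb
  zero_mem' := (𝒜 0).zero_mem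
  algebraMap_mem' := fun c => by
    simpa [Algebra.algebraMap_eq_smul_one] using (𝒜 0).smul_mem c (SetLike.one_mem_graded 𝒜)

/-- The graded radical `r = R₁ ⊕ R₂ ⊕ ⋯` of the graded algebra `R`, as a left ideal. -/
def gradedRadical : Ideal R :=
  Submodule.span R {x : R | ∃ i : ℕ, 0 < i ∧ x ∈ 𝒜 i}

/-- `(R, 𝒜)` is a *Koszul algebra* over `k`: `R₀` is a finite product of copies of `k`,
and `R₀ = R/r`, viewed as a graded `R`-module (with the grading induced from `𝒜`),
admits a linear graded projective resolution. -/
def IsKoszulAlgebra [GradedAlgebra 𝒜] : Prop :=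
  (∃ c : ℕ, Nonempty (gradeZeroSubalgebra k R 𝒜 ≃ₐ[k] (Fin c → k))) ∧
  ∃ ℳ : ModuleGrading k R 𝒜 (R ⧸ gradedRadical k R 𝒜),
    (∀ i : ℕ, ℳ.piece (i : ℤ) =
      (𝒜 i).map ((gradedRadical k R 𝒜).mkQ.restrictScalars k)) ∧
    Nonempty (LinearResolution k R 𝒜 (R ⧸ gradedRadical k R 𝒜) ℳ)

/-- A module is indecomposable if it is nonzero and is not the internal direct sum of two
nonzero submodules. -/
def IsIndecomposableModule (R M : Type) [Ring R] [AddCommGroup M] [Module R M] : Prop :=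
  Nontrivial M ∧ ∀ N₁ N₂ : Submodule R M, IsCompl N₁ N₂ → N₁ = ⊥ ∨ N₂ = ⊥

variable {k R 𝒜}

namespace LinearResolution

variable {M : Type} [AddCommGroup M] [Module R M] [Module k M] [IsScalarTower k R M]
  {ℳ : ModuleGrading k R 𝒜 M}

/-- `η : Pⁿ → M` is a cocycle: `η ∘ d_{n+1} = 0`, i.e. `η` represents an element of
`Ext^n_R(M,M)`. -/
def IsCocycle (res : LinearResolution k R 𝒜 M ℳ) (n : ℕ) (η : res.P n →ₗ[R] M) : Prop :=
  η.comp (res.d n) = 0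

/-- `η : Pⁿ → M` is a coboundary, i.e. `η` represents the zero element of
`Ext^n_R(M,M)`. -/
def IsCoboundary (res : LinearResolution k R 𝒜 M ℳ) :
    ∀ n : ℕ, (res.P n →ₗ[R] M) → Prop
  | 0, η => η = 0
  | n + 1, η => ∃ h : res.P n →ₗ[R] M, η = h.comp (res.d n)

/-- `η : Pⁿ → M` is a homomorphism of degree `s`. -/
def HasDegree (res : LinearResolution k R 𝒜 M ℳ) (n : ℕ) (η : res.P n →ₗ[R] M)
    (s : ℤ) : Prop :=
  ∀ {j : ℤ} {x : res.P n}, x ∈ (res.grading n).piece j → η x ∈ ℳ.piece (j + s)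

/-- The family `l i : P^{n+i} → P^i` is a family of liftings of `η : Pⁿ → M` along the
resolution: `ε ∘ l⁰ = η` and `d ∘ l^{i+1} = l^i ∘ d`. -/
structure IsLifting (res : LinearResolution k R 𝒜 M ℳ) (n : ℕ) (η : res.P n →ₗ[R] M)
    (l : ∀ i, res.P (n + i) →ₗ[R] res.P i) : Prop where
  lift_zero : res.augment.comp (l 0) = η
  lift_comm : ∀ i, (res.d i).comp (l (i + 1)) = (l i).comp (res.d (n + i))

/-- The liftings `l i : P^{n+i} → P^i` of a degree `-n` cocycle are matrices with entries
in `R₀`, i.e. each `l i` is a homomorphism of degree `-n`. -/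
def LiftingEntriesInDegreeZero (res : LinearResolution k R 𝒜 M ℳ) (n : ℕ)
    (l : ∀ i, res.P (n + i) →ₗ[R] res.P i) : Prop :=
  ∀ (i : ℕ) {j : ℤ} {x : res.P (n + i)},
    x ∈ (res.grading (n + i)).piece j → l i x ∈ (res.grading i).piece (j - (n : ℤ))

end LinearResolution

section
variable {k R : Type} [Field k] [Ring R] [Algebra k R] {𝒜 : ℕ → Submodule k R}
  {M : Type} [AddCommGroup M] [Module R M] [Module k M] [IsScalarTower k R M]
  {ℳ : ModuleGrading k R 𝒜 M}

/-- (1) `M` is periodic: `Ω^{m+1} M = range (d m)` is isomorphic to `M` for some `m`. -/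
def LinearResolution.IsPeriodicModule (res : LinearResolution k R 𝒜 M ℳ) : Prop :=
  ∃ m : ℕ, Nonempty (↥(LinearMap.range (res.d m)) ≃ₗ[R] M)

/-- (2) There exist `n ≥ 1` and `η ∈ Δ_M^n` (a degree `-n` cocycle) such that some
lifting of `η` (with entries in `R₀`) is an isomorphism. -/
def LinearResolution.HasDiagonalClassWithBijectiveLifting
    (res : LinearResolution k R 𝒜 M ℳ) : Prop :=
  ∃ (n : ℕ), 1 ≤ n ∧ ∃ (η : res.P n →ₗ[R] M), res.IsCocycle n η ∧
    res.HasDegree n η (-(n : ℤ)) ∧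
    ∃ (l : ∀ i, res.P (n + i) →ₗ[R] res.P i), res.IsLifting n η l ∧
      res.LiftingEntriesInDegreeZero n l ∧ ∃ j, Function.Bijective (l j)

/-- (3) There exist `n ≥ 1` and `η ∈ Δ_M^n` such that some lifting of `η` (with entries
in `R₀`) is a monomorphism. -/
def LinearResolution.HasDiagonalClassWithInjectiveLifting
    (res : LinearResolution k R 𝒜 M ℳ) : Prop :=
  ∃ (n : ℕ), 1 ≤ n ∧ ∃ (η : res.P n →ₗ[R] M), res.IsCocycle n η ∧
    res.HasDegree n η (-(n : ℤ)) ∧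
    ∃ (l : ∀ i, res.P (n + i) →ₗ[R] res.P i), res.IsLifting n η l ∧
      res.LiftingEntriesInDegreeZero n l ∧ ∃ j, Function.Injective (l j)

/-- (4) `M` is eventually periodic: some syzygy is isomorphic to a strictly later
syzygy. -/
def LinearResolution.IsEventuallyPeriodicModule (res : LinearResolution k R 𝒜 M ℳ) :
    Prop :=
  ∃ s t : ℕ,
    Nonempty (↥(LinearMap.range (res.d (s + t + 1))) ≃ₗ[R] ↥(LinearMap.range (res.d s)))

end

/-! ### Homogeneous components of linear maps between graded modules -/

set_option linter.unusedSectionVars false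

section GradedModules

variable {A : Type} [AddCommGroup A] [Module R A] [Module k A] [IsScalarTower k R A]
  {B : Type} [AddCommGroup B] [Module R B] [Module k B] [IsScalarTower k R B]
  {C : Type} [AddCommGroup C] [Module R C] [Module k C] [IsScalarTower k R C]

namespace ModuleGrading

/-- The projection of a graded module onto its degree `j` piece, as an endomorphism. -/
noncomputable def proj (𝓐 : ModuleGrading k R 𝒜 A) (j : ℤ) : A →ₗ[k] A :=
  letI := 𝓐.internal.chooseDecomposition
  (𝓐.piece j).subtype ∘ₗ DirectSum.component k ℤ (fun i => 𝓐.piece i) j ∘ₗ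
    (DirectSum.decomposeLinearEquiv 𝓐.piece).toLinearMap

variable (𝓐 : ModuleGrading k R 𝒜 A) (𝓑 : ModuleGrading k R 𝒜 B) (𝓒 : ModuleGrading k R 𝒜 C)

lemma proj_mem (j : ℤ) (x : A) : 𝓐.proj j x ∈ 𝓐.piece j := by
  simp [proj]

lemma proj_of_mem {j : ℤ} {x : A} (hx : x ∈ 𝓐.piece j) : 𝓐.proj j x = x := by
  let := 𝓐.internal.chooseDecomposition
  exact DirectSum.decompose_of_mem_same 𝓐.piece hx

lemma proj_of_mem_ne {i j : ℤ} {x : A} (hx : x ∈ 𝓐.piece i) (h : i ≠ j) :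
    𝓐.proj j x = 0 := by
  let := 𝓐.internal.chooseDecomposition
  exact DirectSum.decompose_of_mem_ne 𝓐.piece hx h

lemma induction_homogeneous {p : A → Prop} (zero : p 0)
    (hom : ∀ (j : ℤ) (x : A), x ∈ 𝓐.piece j → p x)
    (add : ∀ x y, p x → p y → p (x + y)) (x : A) : p x := by
  let := 𝓐.internal.chooseDecomposition
  exact DirectSum.Decomposition.inductionOn 𝓐.piece zero (fun x => hom _ _ x.2) add x

lemma proj_smul {i : ℕ} {r : R} (hr : r ∈ 𝒜 i) (j : ℤ) (x : A) :
    𝓐.proj (i + j) (r • x) = r • 𝓐.proj j x := by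
  induction x using 𝓐.induction_homogeneous with
  | zero => simp
  | add x y hx hy => simp [hx, hy]
  | hom l x hx =>
    by_cases h : l = j
    · subst h
      rw [𝓐.proj_of_mem hx, 𝓐.proj_of_mem (𝓐.smul_mem hr hx)]
    · rw [𝓐.proj_of_mem_ne hx h, 𝓐.proj_of_mem_ne (𝓐.smul_mem hr hx) (by omega), smul_zero]

/-- `f` is homogeneous of degree `s`: it maps the piece of degree `j` to that of degree
`j + s`. -/
def IsHom (s : ℤ) (f : A →ₗ[R] B) : Prop :=
  ∀ ⦃j : ℤ⦄ ⦃x : A⦄, x ∈ 𝓐.piece j → f x ∈ 𝓑.piece (j + s)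

variable {𝓐 𝓑 𝓒}

lemma IsHom.proj_apply {s : ℤ} {f : A →ₗ[R] B} (hf : IsHom 𝓐 𝓑 s f) (j : ℤ) (x : A) :
    𝓑.proj (j + s) (f x) = f (𝓐.proj j x) := by
  induction x using 𝓐.induction_homogeneous with
  | zero => simp
  | add x y hx hy => simp [hx, hy]
  | hom l x hx =>
    by_cases h : l = j
    · subst h
      rw [𝓐.proj_of_mem hx, 𝓑.proj_of_mem (hf hx)]
    · rw [𝓐.proj_of_mem_ne hx h, 𝓑.proj_of_mem_ne (hf hx) (by omega), map_zero]

variable (𝓐 𝓑 𝓒) [GradedAlgebra 𝒜]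

/-- The degree `s` component of a linear map `f` between graded modules, sending a
homogeneous `x` of degree `j` to the degree `j + s` component of `f x`. -/
noncomputable def comp (s : ℤ) (f : A →ₗ[R] B) : A →ₗ[R] B :=
  letI := 𝓐.internal.chooseDecomposition
  let F : A →ₗ[k] B := DirectSum.toModule k ℤ B (fun j =>
      𝓑.proj (j + s) ∘ₗ f.restrictScalars k ∘ₗ (𝓐.piece j).subtype) ∘ₗ
    (DirectSum.decomposeLinearEquiv 𝓐.piece).toLinearMap
  have hF : ∀ (j : ℤ) (x : A), x ∈ 𝓐.piece j → F x = 𝓑.proj (j + s) (f x) := by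
    intro j x hx
    lift x to 𝓐.piece j using hx
    simp only [F, LinearMap.comp_apply, LinearEquiv.coe_coe,
      DirectSum.decomposeLinearEquiv_apply, DirectSum.decompose_coe]
    erw [DirectSum.toModule_lof]
    rfl
  { F with
    map_smul' := by
      intro r x
      change F (r • x) = r • F x
      induction r using DirectSum.Decomposition.inductionOn 𝒜 with
      | zero => simp
      | add a b ha hb => rw [add_smul, map_add, ha, hb, add_smul]
      | @homogeneous i r =>
        induction x using 𝓐.induction_homogeneous with
        | zero => simp
        | add x y hx hy => rw [smul_add, map_add, hx, hy, map_add, smul_add]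
        | hom j x hx =>
          rw [hF _ _ (𝓐.smul_mem r.2 hx), hF _ _ hx, map_smul, add_assoc,
            𝓑.proj_smul r.2] }

lemma comp_apply {s : ℤ} {f : A →ₗ[R] B} {j : ℤ} {x : A} (hx : x ∈ 𝓐.piece j) :
    comp 𝓐 𝓑 s f x = 𝓑.proj (j + s) (f x) := by
  let := 𝓐.internal.chooseDecomposition
  lift x to 𝓐.piece j using hx
  change (DirectSum.toModule k ℤ B (fun j =>
      𝓑.proj (j + s) ∘ₗ f.restrictScalars k ∘ₗ (𝓐.piece j).subtype)
    (DirectSum.decompose 𝓐.piece (x : A))) = _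
  rw [DirectSum.decompose_coe]
  erw [DirectSum.toModule_lof]
  rfl

lemma comp_isHom (s : ℤ) (f : A →ₗ[R] B) : IsHom 𝓐 𝓑 s (comp 𝓐 𝓑 s f) := by
  intro j x hx
  rw [comp_apply 𝓐 𝓑 hx]
  exact 𝓑.proj_mem _ _

lemma hom_ext {f g : A →ₗ[R] B} (h : ∀ (j : ℤ) (x : A), x ∈ 𝓐.piece j → f x = g x) : f = g := by
  ext x
  induction x using 𝓐.induction_homogeneous with
  | zero => simp
  | add x y hx hy => simp [hx, hy]
  | hom j x hx => exact h j x hx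

variable {𝓐 𝓑 𝓒}

lemma IsHom.comp_eq {s : ℤ} {f : A →ₗ[R] B} (hf : IsHom 𝓐 𝓑 s f) :
    ModuleGrading.comp 𝓐 𝓑 s f = f :=
  𝓐.hom_ext fun j x hx => by rw [comp_apply 𝓐 𝓑 hx, 𝓑.proj_of_mem (hf hx)]

lemma IsHom.left_comp {s t u : ℤ} {g : B →ₗ[R] C} (hg : IsHom 𝓑 𝓒 t g) (f : A →ₗ[R] B)
    (hu : u = s + t) :
    ModuleGrading.comp 𝓐 𝓒 u (g ∘ₗ f) = g ∘ₗ ModuleGrading.comp 𝓐 𝓑 s f := by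
  subst hu
  refine 𝓐.hom_ext fun j x hx => ?_
  rw [comp_apply 𝓐 𝓒 hx, LinearMap.comp_apply, LinearMap.comp_apply, comp_apply 𝓐 𝓑 hx,
    ← hg.proj_apply, add_assoc]

lemma IsHom.right_comp {s t u : ℤ} {f : A →ₗ[R] B} (hf : IsHom 𝓐 𝓑 s f) (g : B →ₗ[R] C)
    (hu : u = s + t) :
    ModuleGrading.comp 𝓐 𝓒 u (g ∘ₗ f) = ModuleGrading.comp 𝓑 𝓒 t g ∘ₗ f := by
  subst hu
  refine 𝓐.hom_ext fun j x hx => ?_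
  rw [comp_apply 𝓐 𝓒 hx, LinearMap.comp_apply, LinearMap.comp_apply, comp_apply 𝓑 𝓒 (hf hx),
    add_assoc]

lemma IsHom.trans {s t u : ℤ} {f : A →ₗ[R] B} {g : B →ₗ[R] C} (hg : IsHom 𝓑 𝓒 t g)
    (hf : IsHom 𝓐 𝓑 s f) (hu : u = s + t) : IsHom 𝓐 𝓒 u (g ∘ₗ f) := by
  subst hu
  intro j x hx
  rw [← add_assoc]
  exact hg (hf hx)

lemma isHom_id : IsHom 𝓐 𝓐 0 LinearMap.id := by
  intro j x hx
  simpa using hx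

lemma IsHom.sub {s : ℤ} {f g : A →ₗ[R] B} (hf : IsHom 𝓐 𝓑 s f) (hg : IsHom 𝓐 𝓑 s g) :
    IsHom 𝓐 𝓑 s (f - g) := fun _ _ hx => (𝓑.piece _).sub_mem (hf hx) (hg hx)

lemma exists_lift_of_projective [Module.Projective R A] {g : B →ₗ[R] C} {f : A →ₗ[R] C}
    (h : LinearMap.range f ≤ LinearMap.range g) : ∃ l : A →ₗ[R] B, g ∘ₗ l = f := by
  obtain ⟨l, hl⟩ := Module.projective_lifting_property g.rangeRestrict
    (f.codRestrict (LinearMap.range g) fun x => h ⟨x, rfl⟩) g.surjective_rangeRestrict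
  exact ⟨l, LinearMap.ext fun x => congrArg Subtype.val (LinearMap.congr_fun hl x)⟩

/-- Linear lifting problems against a homogeneous map have homogeneous solutions when the
source is projective. -/
lemma exists_homogeneous_lift [Module.Projective R A] {s t u : ℤ} {g : B →ₗ[R] C}
    (hg : IsHom 𝓑 𝓒 t g) {f : A →ₗ[R] C} (hf : IsHom 𝓐 𝓒 u f) (hu : u = s + t)
    (h : LinearMap.range f ≤ LinearMap.range g) :
    ∃ l : A →ₗ[R] B, IsHom 𝓐 𝓑 s l ∧ g ∘ₗ l = f := by
  obtain ⟨l, hl⟩ := exists_lift_of_projective h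
  exact ⟨ModuleGrading.comp 𝓐 𝓑 s l, comp_isHom _ _ _ _, by
    rw [← hg.left_comp l hu, hl, hf.comp_eq]⟩

lemma exists_extension_of_injective (hC : Module.Injective R C) {g : A →ₗ[R] B}
    {f : A →ₗ[R] C} (h : LinearMap.ker g ≤ LinearMap.ker f) :
    ∃ l : B →ₗ[R] C, l ∘ₗ g = f := by
  obtain ⟨l, hl⟩ := hC.out ((LinearMap.ker g).liftQ g le_rfl)
    (LinearMap.ker_eq_bot.mp (Submodule.ker_liftQ_eq_bot _ _ _ le_rfl))
    ((LinearMap.ker g).liftQ f h)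
  exact ⟨l, LinearMap.ext fun x => by simpa using hl ((LinearMap.ker g).mkQ x)⟩

/-- Linear extension problems along a homogeneous map have homogeneous solutions when the
target is injective. -/
lemma exists_homogeneous_extension (hC : Module.Injective R C) {s t u : ℤ} {g : A →ₗ[R] B}
    (hg : IsHom 𝓐 𝓑 t g) {f : A →ₗ[R] C} (hf : IsHom 𝓐 𝓒 u f) (hu : u = t + s)
    (h : LinearMap.ker g ≤ LinearMap.ker f) :
    ∃ l : B →ₗ[R] C, IsHom 𝓑 𝓒 s l ∧ l ∘ₗ g = f := by
  obtain ⟨l, hl⟩ := exists_extension_of_injective hC h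
  exact ⟨ModuleGrading.comp 𝓑 𝓒 s l, comp_isHom _ _ _ _, by
    rw [← hg.right_comp l hu, hl, hf.comp_eq]⟩

variable (𝓐 𝓑 𝓒)

/-- The graded module is generated by its piece of degree `a` and vanishes below it. -/
structure GeneratedIn (a : ℤ) : Prop where
  span_eq : Submodule.span R (𝓐.piece a : Set A) = ⊤
  vanish : ∀ j, j < a → 𝓐.piece j = ⊥

variable {𝓐 𝓑 𝓒}

lemma GeneratedIn.proj_eq_zero {a : ℤ} (h : 𝓐.GeneratedIn a) {j : ℤ} (hj : j < a) (x : A) :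
    𝓐.proj j x = 0 := by
  have := 𝓐.proj_mem j x
  rwa [h.vanish j hj, Submodule.mem_bot] at this

lemma GeneratedIn.hom_ext {a : ℤ} (h : 𝓐.GeneratedIn a) {f g : A →ₗ[R] B}
    (hfg : ∀ x ∈ 𝓐.piece a, f x = g x) : f = g :=
  LinearMap.ext_on h.span_eq hfg

/-- A linear map cannot lower degrees by more than the distance between the generating
degrees, so the lowest component of `g y` only depends on the lowest component of `y`. -/
lemma GeneratedIn.proj_apply {b c : ℤ} (hB : 𝓑.GeneratedIn b) (hC : ∀ j, j < c → 𝓒.piece j = ⊥)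
    (g : B →ₗ[R] C) (y : B) : 𝓒.proj c (g y) = 𝓒.proj c (g (𝓑.proj b y)) := by
  have hy : y ∈ Submodule.span R (𝓑.piece b : Set B) := hB.span_eq ▸ Submodule.mem_top
  induction hy using Submodule.span_induction with
  | mem x hx => rw [𝓑.proj_of_mem hx]
  | zero => simp
  | add x y _ _ hx hy => simp [hx, hy]
  | smul r y _ hy =>
    induction r using DirectSum.Decomposition.inductionOn 𝒜 with
    | zero => simp
    | add r r' hr hr' => simp only [add_smul, map_add, hr, hr']
    | @homogeneous i r =>
      have h1 := 𝓒.proj_smul r.2 (c - i) (g y)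
      have h2 := 𝓑.proj_smul r.2 (b - i) y
      rw [add_sub_cancel] at h1 h2
      rw [map_smul, h1, h2, map_smul]
      have h3 := 𝓒.proj_smul r.2 (c - i) (g (𝓑.proj (b - i) y))
      rw [add_sub_cancel] at h3
      rw [h3]
      rcases Nat.eq_zero_or_pos i with rfl | hi
      · simp only [Nat.cast_zero, sub_zero, hy]
      · have h4 (z : C) : 𝓒.proj (c - i) z = 0 := by
          have := 𝓒.proj_mem (c - i) z
          rwa [hC _ (by omega), Submodule.mem_bot] at this
        simp only [h4]

/-- Taking leading components is multiplicative. -/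
lemma GeneratedIn.comp_comp {a b c s t u : ℤ} (hA : 𝓐.GeneratedIn a) (hB : 𝓑.GeneratedIn b)
    (hC : ∀ j, j < c → 𝓒.piece j = ⊥) (g : B →ₗ[R] C) (f : A →ₗ[R] B)
    (hs : a + s = b) (ht : b + t = c) (hu : a + u = c) :
    comp 𝓐 𝓒 u (g ∘ₗ f) = comp 𝓑 𝓒 t g ∘ₗ comp 𝓐 𝓑 s f := by
  refine hA.hom_ext fun x hx => ?_
  rw [comp_apply 𝓐 𝓒 hx, LinearMap.comp_apply, LinearMap.comp_apply, comp_apply 𝓐 𝓑 hx, hu, hs,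
    comp_apply 𝓑 𝓒 (𝓑.proj_mem _ _), ht]
  exact hB.proj_apply hC g (f x)

end ModuleGrading

/-! ### Modules generated in one degree and their generating pieces over `R₀` -/

namespace ModuleGrading

variable [GradedAlgebra 𝒜] (𝓐 : ModuleGrading k R 𝒜 A) (𝓑 : ModuleGrading k R 𝒜 B)

/-- The piece of degree `a`, as a module over `R₀`. -/
def pieceZero (a : ℤ) : Submodule (gradeZeroSubalgebra k R 𝒜) A where
  carrier := 𝓐.piece a
  add_mem' := (𝓐.piece a).add_mem
  zero_mem' := (𝓐.piece a).zero_mem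
  smul_mem' := fun r x hx => by
    have := 𝓐.smul_mem (i := 0) (r := (r : R)) r.2 hx
    rwa [Nat.cast_zero, zero_add] at this

variable (𝒜) in
/-- The degree zero component of an element of `R`. -/
noncomputable def zeroPart (r : R) : gradeZeroSubalgebra k R 𝒜 :=
  ⟨DirectSum.decompose 𝒜 r 0, (DirectSum.decompose 𝒜 r 0).2⟩

lemma proj_smul_of_vanish {a : ℤ} (hA : ∀ j, j < a → 𝓐.piece j = ⊥) (r : R) (x : A) :
    𝓐.proj a (r • x) = zeroPart 𝒜 r • 𝓐.proj a x := by
  change _ = ((DirectSum.decompose 𝒜 r 0 : 𝒜 0) : R) • 𝓐.proj a x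
  induction r using DirectSum.Decomposition.inductionOn 𝒜 with
  | zero => simp
  | add r r' hr hr' => simp [add_smul, hr, hr']
  | @homogeneous i r =>
    have h1 := 𝓐.proj_smul r.2 (a - i) x
    rw [add_sub_cancel] at h1
    rw [h1]
    rcases Nat.eq_zero_or_pos i with rfl | hi
    · simp
    · rw [DirectSum.decompose_of_mem_ne 𝒜 r.2 hi.ne', zero_smul]
      have := 𝓐.proj_mem (a - i) x
      rw [hA _ (by omega), Submodule.mem_bot] at this
      rw [this, smul_zero]

/-- A finitely generated module that vanishes below degree `a` has its degree `a` piece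
finitely generated over `R₀`. -/
lemma finite_pieceZero [Module.Finite R A] {a : ℤ} (hA : ∀ j, j < a → 𝓐.piece j = ⊥) :
    Module.Finite (gradeZeroSubalgebra k R 𝒜) (𝓐.pieceZero a) := by
  classical
  obtain ⟨S, hS⟩ := Module.Finite.fg_top (R := R) (M := A)
  rw [Module.Finite.iff_fg]
  refine ⟨S.image (𝓐.proj a), le_antisymm ?_ fun x (hx : x ∈ 𝓐.piece a) => ?_⟩
  · rw [Submodule.span_le]
    intro y hy
    obtain ⟨x, -, rfl⟩ := Finset.mem_image.mp (Finset.mem_coe.mp hy)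
    exact 𝓐.proj_mem a x
  · rw [← 𝓐.proj_of_mem hx]
    have hx' : x ∈ Submodule.span R (S : Set A) := hS ▸ Submodule.mem_top
    clear hx
    induction hx' using Submodule.span_induction with
    | mem x hx => exact Submodule.subset_span (by simpa using ⟨x, hx, rfl⟩)
    | zero => simp
    | add x y _ _ hx hy => rw [map_add]; exact Submodule.add_mem _ hx hy
    | smul r x _ hx =>
      rw [𝓐.proj_smul_of_vanish hA]
      exact Submodule.smul_mem _ _ hx

variable {𝓐 𝓑}

/-- A projective module generated in degree `a` is induced from its generating piece:
every `R₀`-linear map on that piece extends to a homogeneous `R`-linear map. -/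
lemma GeneratedIn.exists_extension [Module.Projective R A] {a b s : ℤ} (hA : 𝓐.GeneratedIn a)
    (hB : ∀ j, j < b → 𝓑.piece j = ⊥) (hs : a + s = b)
    (φ : 𝓐.pieceZero a →ₗ[gradeZeroSubalgebra k R 𝒜] 𝓑.pieceZero b) :
    ∃ f : A →ₗ[R] B, IsHom 𝓐 𝓑 s f ∧ ∀ x : 𝓐.pieceZero a, f x = φ x := by
  let π : (𝓐.pieceZero a →₀ R) →ₗ[R] A :=
    Finsupp.linearCombination R (Subtype.val : 𝓐.pieceZero a → A)
  have hπ : Function.Surjective π := by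
    rw [← LinearMap.range_eq_top, Finsupp.range_linearCombination, Subtype.range_coe]
    exact hA.span_eq
  obtain ⟨σ, hσ⟩ := Module.projective_lifting_property π LinearMap.id hπ
  let Φ : (𝓐.pieceZero a →₀ R) →ₗ[R] B :=
    Finsupp.linearCombination R (fun v => (φ v : B))
  -- The lowest component of `Φ c` is computed by `φ` from the lowest component of `π c`.
  have key (c : 𝓐.pieceZero a →₀ R) :
      𝓑.proj b (Φ c) = φ ⟨𝓐.proj a (π c), 𝓐.proj_mem a _⟩ := by
    induction c using Finsupp.induction_linear with
    | zero =>
      have : (⟨𝓐.proj a (π 0), 𝓐.proj_mem a _⟩ : 𝓐.pieceZero a) = 0 := by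
        ext; simp
      rw [this]; simp
    | add c c' hc hc' =>
      have : (⟨𝓐.proj a (π (c + c')), 𝓐.proj_mem a _⟩ : 𝓐.pieceZero a) =
          ⟨𝓐.proj a (π c), 𝓐.proj_mem a _⟩ + ⟨𝓐.proj a (π c'), 𝓐.proj_mem a _⟩ := by
        ext; simp
      rw [this]; simp [hc, hc']
    | single v r =>
      have : (⟨𝓐.proj a (π (Finsupp.single v r)), 𝓐.proj_mem a _⟩ : 𝓐.pieceZero a) =
          zeroPart 𝒜 r • v := by
        ext
        change 𝓐.proj a (π (Finsupp.single v r)) = zeroPart 𝒜 r • (v : A)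
        rw [Finsupp.linearCombination_single, 𝓐.proj_smul_of_vanish hA.vanish,
          𝓐.proj_of_mem v.2]
      rw [this, map_smul, Finsupp.linearCombination_single, 𝓑.proj_smul_of_vanish hB,
        𝓑.proj_of_mem (φ v).2]
      rfl
  refine ⟨comp 𝓐 𝓑 s (Φ ∘ₗ σ), comp_isHom _ _ _ _, fun x => ?_⟩
  rw [comp_apply 𝓐 𝓑 x.2, hs, LinearMap.comp_apply, key]
  congr 2
  ext
  change 𝓐.proj a ((π ∘ₗ σ) x) = x
  rw [hσ]
  exact 𝓐.proj_of_mem x.2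

/-- The restriction of a homogeneous map to a single piece, as an `R₀`-linear map. -/
def IsHom.onPiece {s : ℤ} {f : A →ₗ[R] B} (hf : IsHom 𝓐 𝓑 s f) {a b : ℤ} (hs : a + s = b) :
    𝓐.pieceZero a →ₗ[gradeZeroSubalgebra k R 𝒜] 𝓑.pieceZero b where
  toFun x := ⟨f x, hs ▸ hf x.2⟩
  map_add' _ _ := Subtype.ext (map_add f _ _)
  map_smul' r x := Subtype.ext (map_smul f (r : R) (x : A))

/-- A homogeneous map between projectives, each generated in one degree, is injective once it
is injective on generators, because `R₀` is semisimple. -/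
lemma IsHom.injective_of_onPiece [IsSemisimpleRing (gradeZeroSubalgebra k R 𝒜)]
    [Module.Projective R B] {a b s : ℤ}
    (hA : 𝓐.GeneratedIn a) (hB : 𝓑.GeneratedIn b) {f : A →ₗ[R] B} (hf : IsHom 𝓐 𝓑 s f)
    (hs : a + s = b) (hinj : Function.Injective (hf.onPiece hs)) : Function.Injective f := by
  obtain ⟨ρ, hρ⟩ := (Module.injective_of_isSemisimpleRing (gradeZeroSubalgebra k R 𝒜)
    (𝓐.pieceZero a)).out (hf.onPiece hs) hinj LinearMap.id
  obtain ⟨g, -, hg⟩ := hB.exists_extension hA.vanish (s := -s) (by omega) ρ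
  have : g ∘ₗ f = LinearMap.id := hA.hom_ext fun x hx => by
    have h1 := hg (hf.onPiece hs ⟨x, hx⟩)
    rw [hρ] at h1
    exact h1
  exact Function.LeftInverse.injective (LinearMap.congr_fun this)

lemma IsHom.surjective_of_onPiece {a b s : ℤ}
    (hB : 𝓑.GeneratedIn b) {f : A →ₗ[R] B} (hf : IsHom 𝓐 𝓑 s f)
    (hs : a + s = b) (hsurj : Function.Surjective (hf.onPiece hs)) :
    Function.Surjective f := by
  rw [← LinearMap.range_eq_top, eq_top_iff, ← hB.span_eq, Submodule.span_le]
  intro y hy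
  obtain ⟨x, hx⟩ := hsurj ⟨y, hy⟩
  exact ⟨x, congrArg Subtype.val hx⟩

end ModuleGrading

end GradedModules

section KoszulDegreeZero

variable [GradedAlgebra 𝒜]

lemma IsKoszulAlgebra.isSemisimpleRing (h : IsKoszulAlgebra k R 𝒜) :
    IsSemisimpleRing (gradeZeroSubalgebra k R 𝒜) := by
  obtain ⟨c, ⟨e⟩⟩ := h.1
  exact e.symm.toRingEquiv.isSemisimpleRing

lemma IsKoszulAlgebra.finite_gradeZero (h : IsKoszulAlgebra k R 𝒜) :
    Module.Finite k (gradeZeroSubalgebra k R 𝒜) := by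
  obtain ⟨c, ⟨e⟩⟩ := h.1
  exact Module.Finite.equiv e.symm.toLinearEquiv

end KoszulDegreeZero

/-! ### Linear resolutions -/

namespace LinearResolution

open ModuleGrading

variable {M : Type} [AddCommGroup M] [Module R M] [Module k M] [IsScalarTower k R M]
  {ℳ : ModuleGrading k R 𝒜 M} [GradedAlgebra 𝒜] (res : LinearResolution k R 𝒜 M ℳ)

lemma generatedIn (n : ℕ) : (res.grading n).GeneratedIn n :=
  ⟨res.generated n, res.vanish n⟩

lemma d_isHom (n : ℕ) : IsHom (res.grading (n + 1)) (res.grading n) 0 (res.d n) := by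
  intro j x hx
  simpa using res.d_degree n hx

lemma augment_isHom : IsHom (res.grading 0) ℳ 0 res.augment := by
  intro j x hx
  simpa using res.augment_degree hx

/-- Minimality of the resolution: boundaries have no component in the generating degree. -/
lemma eq_zero_of_mem_range {n : ℕ} {x : res.P n} (h : x ∈ LinearMap.range (res.d n))
    (hx : x ∈ (res.grading n).piece n) : x = 0 := by
  obtain ⟨y, rfl⟩ := h
  have h1 := (res.d_isHom n).proj_apply n y
  rw [add_zero, (res.grading n).proj_of_mem hx,
    (res.generatedIn (n + 1)).proj_eq_zero (by push_cast; omega), map_zero] at h1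
  exact h1

lemma eq_zero_of_d_eq_zero {n : ℕ} {x : res.P (n + 1)} (h : res.d n x = 0)
    (hx : x ∈ (res.grading (n + 1)).piece (n + 1 : ℕ)) : x = 0 := by
  refine res.eq_zero_of_mem_range ?_ hx
  rw [← res.exact_succ]
  exact h

lemma eq_zero_of_augment_eq_zero {x : res.P 0} (h : res.augment x = 0)
    (hx : x ∈ (res.grading 0).piece (0 : ℕ)) : x = 0 := by
  refine res.eq_zero_of_mem_range ?_ hx
  rw [← res.exact_zero]
  exact h

lemma d_comp_d (n : ℕ) (x : res.P (n + 2)) : res.d n (res.d (n + 1) x) = 0 := by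
  rw [← LinearMap.mem_ker, res.exact_succ]
  exact ⟨x, rfl⟩

lemma augment_comp_d (x : res.P 1) : res.augment (res.d 0 x) = 0 := by
  rw [← LinearMap.mem_ker, res.exact_zero]
  exact ⟨x, rfl⟩

/-- A homogeneous first lifting of a cocycle continues to a full family of homogeneous
liftings. -/
lemma exists_lifting (n : ℕ) (l₀ : res.P n →ₗ[R] res.P 0)
    (h₀ : IsHom (res.grading n) (res.grading 0) (-(n : ℤ)) l₀)
    (hc : res.IsCocycle n (res.augment ∘ₗ l₀)) :
    ∃ l : ∀ i, res.P (n + i) →ₗ[R] res.P i, l 0 = l₀ ∧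
      res.IsLifting n (res.augment ∘ₗ l₀) l ∧ res.LiftingEntriesInDegreeZero n l := by
  let T (i : ℕ) := {l : res.P (n + i) →ₗ[R] res.P i //
    IsHom (res.grading (n + i)) (res.grading i) (-(n : ℤ)) l ∧
      LinearMap.range (l ∘ₗ res.d (n + i)) ≤ LinearMap.range (res.d i)}
  have step (i : ℕ) (l : T i) : ∃ l' : T (i + 1), res.d i ∘ₗ l'.1 = l.1 ∘ₗ res.d (n + i) := by
    obtain ⟨l, hl, hr⟩ := l
    have := res.projective (n + (i + 1))
    obtain ⟨l', hl', h⟩ := exists_homogeneous_lift (𝓐 := res.grading (n + (i + 1)))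
      (s := -(n : ℤ)) (res.d_isHom i) (hl.trans (res.d_isHom (n + i)) rfl) (by omega) hr
    refine ⟨⟨l', hl', ?_⟩, h⟩
    rw [← res.exact_succ]
    rintro _ ⟨x, rfl⟩
    rw [LinearMap.mem_ker]
    have := LinearMap.congr_fun h (res.d (n + (i + 1)) x)
    simp only [LinearMap.comp_apply] at this ⊢
    rw [this]
    exact (congrArg l (res.d_comp_d (n + i) x)).trans (map_zero l)
  choose next hnext using step
  let t₀ : T 0 := ⟨l₀, h₀, by
    rw [← res.exact_zero]
    rintro _ ⟨x, rfl⟩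
    exact LinearMap.congr_fun hc x⟩
  let t (i : ℕ) : T i := Nat.rec t₀ next i
  refine ⟨fun i => (t i).1, rfl, ⟨rfl, fun i => hnext i (t i)⟩, fun i j x hx => ?_⟩
  rw [sub_eq_add_neg]
  exact (t i).2.1 hx

lemma hasBijectiveLifting_of_isPeriodic (h : res.IsPeriodicModule) :
    res.HasDiagonalClassWithBijectiveLifting := by
  obtain ⟨m, ⟨φ⟩⟩ := h
  have := res.projective (m + 1)
  have := res.projective 0
  obtain ⟨L, hL⟩ := Module.projective_lifting_property res.augment
    (φ.toLinearMap ∘ₗ (res.d m).rangeRestrict) res.augment_surjective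
  obtain ⟨L', hL'⟩ := Module.projective_lifting_property (res.d m).rangeRestrict
    (φ.symm.toLinearMap ∘ₗ res.augment) (res.d m).surjective_rangeRestrict
  have hL (x) : res.augment (L x) = φ ((res.d m).rangeRestrict x) := LinearMap.congr_fun hL x
  have hL' (x) : (res.d m).rangeRestrict (L' x) = φ.symm (res.augment x) :=
    LinearMap.congr_fun hL' x
  have h1 : res.augment ∘ₗ (L ∘ₗ L') = res.augment := by
    ext x
    simp [hL, hL']
  have h2 : res.d m ∘ₗ (L' ∘ₗ L) = res.d m := by
    ext x
    have := congrArg Subtype.val (hL' (L x))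
    rw [hL, LinearEquiv.symm_apply_apply] at this
    exact this
  have h3 : (res.augment ∘ₗ L) ∘ₗ res.d (m + 1) = 0 := by
    ext x
    have : (res.d m).rangeRestrict (res.d (m + 1) x) = 0 := Subtype.ext (res.d_comp_d m x)
    simp [hL, this]
  let K := comp (res.grading (m + 1)) (res.grading 0) (-((m + 1 : ℕ) : ℤ)) L
  let K' := comp (res.grading 0) (res.grading (m + 1)) (m + 1 : ℕ) L'
  have hK : IsHom (res.grading (m + 1)) (res.grading 0) (-((m + 1 : ℕ) : ℤ)) K := comp_isHom _ _ _ _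
  have hKK : K ∘ₗ K' = LinearMap.id := by
    have e : comp (res.grading 0) (res.grading 0) 0 (L ∘ₗ L') = K ∘ₗ K' :=
      (res.generatedIn 0).comp_comp (res.generatedIn (m + 1)) (res.vanish 0) L L'
        (by simp) (by simp) (by simp)
    have e2 := res.augment_isHom.left_comp (𝓐 := res.grading 0) (s := 0) (u := 0)
      (L ∘ₗ L') (by simp)
    rw [h1, res.augment_isHom.comp_eq, e] at e2
    refine (res.generatedIn 0).hom_ext fun x hx => ?_
    rw [← sub_eq_zero]
    refine res.eq_zero_of_augment_eq_zero ?_ (Submodule.sub_mem _ ?_ hx)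
    · rw [map_sub, sub_eq_zero]
      exact (LinearMap.congr_fun e2 x).symm
    · rw [← e]
      simpa using comp_isHom (res.grading 0) (res.grading 0) 0 (L ∘ₗ L') hx
  have hK'K : K' ∘ₗ K = LinearMap.id := by
    have e : comp (res.grading (m + 1)) (res.grading (m + 1)) 0 (L' ∘ₗ L) = K' ∘ₗ K :=
      (res.generatedIn (m + 1)).comp_comp (res.generatedIn 0) (res.vanish (m + 1)) L' L
        (by simp) (by simp) (by simp)
    have e2 := (res.d_isHom m).left_comp (𝓐 := res.grading (m + 1)) (s := 0) (u := 0)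
      (L' ∘ₗ L) (by simp)
    rw [h2, (res.d_isHom m).comp_eq, e] at e2
    refine (res.generatedIn (m + 1)).hom_ext fun x hx => ?_
    rw [← sub_eq_zero]
    refine res.eq_zero_of_d_eq_zero ?_ (Submodule.sub_mem _ ?_ hx)
    · rw [map_sub, sub_eq_zero]
      exact (LinearMap.congr_fun e2 x).symm
    · rw [← e]
      simpa using comp_isHom (res.grading (m + 1)) (res.grading (m + 1)) 0 (L' ∘ₗ L) hx
  have hcoc : res.IsCocycle (m + 1) (res.augment ∘ₗ K) := by
    have e := res.augment_isHom.left_comp (𝓐 := res.grading (m + 1))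
      (s := -((m + 1 : ℕ) : ℤ)) (u := -((m + 1 : ℕ) : ℤ)) L (by simp)
    have e2 := (res.d_isHom (m + 1)).right_comp (𝓒 := ℳ) (t := -((m + 1 : ℕ) : ℤ))
      (u := -((m + 1 : ℕ) : ℤ)) (res.augment ∘ₗ L) (by simp)
    have e3 : IsHom (res.grading (m + 1 + 1)) ℳ (-((m + 1 : ℕ) : ℤ)) 0 :=
      fun _ _ _ => Submodule.zero_mem _
    rw [h3, e3.comp_eq, e] at e2
    exact e2.symm
  obtain ⟨l, hl0, hlift, hdeg⟩ := res.exists_lifting (m + 1) K hK hcoc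
  refine ⟨m + 1, by omega, res.augment ∘ₗ K, hcoc, fun {j x} hx => ?_, l, hlift, hdeg, 0, ?_⟩
  · exact (res.augment_isHom.trans hK (by simp)) hx
  · rw [hl0]
    exact ⟨Function.LeftInverse.injective (g := K') (LinearMap.congr_fun hK'K),
      Function.RightInverse.surjective (g := K') (LinearMap.congr_fun hKK)⟩

/-! ### Injective liftings are eventually bijective -/

/-- A sequence of naturals that does not increase under shifting by `n` is eventually
`n`-periodic. -/
lemma eventually_shift_eq {D : ℕ → ℕ} {n j : ℕ} (h : ∀ i, j ≤ i → D (n + i) ≤ D i) :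
    ∃ I, j ≤ I ∧ ∀ i, I ≤ i → D (n + i) = D i := by
  -- The sums over windows of length `n` decrease, so they are constant from a minimum on.
  let s (i : ℕ) := ∑ a ∈ Finset.range n, D (j + i + a)
  have hs (i : ℕ) : s (i + 1) + D (j + i) = s i + D (n + (j + i)) := by
    have h1 := Finset.sum_range_succ (fun a => D (j + i + a)) n
    have h2 := Finset.sum_range_succ' (fun a => D (j + i + a)) n
    have h3 : s (i + 1) = ∑ a ∈ Finset.range n, D (j + i + (a + 1)) :=
      Finset.sum_congr rfl fun a _ => by congr 1; omega
    rw [h1, add_zero] at h2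
    rw [h3, ← h2, add_comm n]
  have hle (i : ℕ) : s (i + 1) ≤ s i := by
    have := hs i
    have := h (j + i) (by omega)
    omega
  have hanti : Antitone s := antitone_nat_of_succ_le hle
  obtain ⟨i₀, hi₀⟩ : ∃ i₀, ∀ i, s i₀ ≤ s i := ⟨Function.argmin s, fun i => Function.argmin_le s i⟩
  refine ⟨j + i₀, by omega, fun i hi => ?_⟩
  obtain ⟨c, rfl⟩ := Nat.exists_eq_add_of_le hi
  have e1 := hs (i₀ + c)
  have e2 := hi₀ (i₀ + c + 1)
  have e3 := hanti (Nat.le_add_right i₀ c)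
  have e4 := hle (i₀ + c)
  rw [← add_assoc j i₀ c] at e1
  omega

/-- Injectivity passes from `l^i` to `l^{i+1}`, since the differential of `P^{n+i+1}` is injective
on generators. -/
lemma injective_lifting_of_le [IsSemisimpleRing (gradeZeroSubalgebra k R 𝒜)] {n : ℕ}
    {η : res.P n →ₗ[R] M} {l : ∀ i, res.P (n + i) →ₗ[R] res.P i} (hl : res.IsLifting n η l)
    (hdeg : ∀ i, IsHom (res.grading (n + i)) (res.grading i) (-(n : ℤ)) (l i))
    {j : ℕ} (hj : Function.Injective (l j)) (i : ℕ) (hi : j ≤ i) :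
    Function.Injective (l i) := by
  induction i, hi using Nat.le_induction with
  | base => exact hj
  | succ i hi ih =>
    have := res.projective (i + 1)
    refine (hdeg (i + 1)).injective_of_onPiece (res.generatedIn (n + (i + 1)))
      (res.generatedIn (i + 1)) (by push_cast; ring) ?_
    rw [injective_iff_map_eq_zero]
    rintro ⟨x, hx⟩ h
    have h0 : l (i + 1) x = 0 := congrArg Subtype.val h
    have h1 := LinearMap.congr_fun (hl.lift_comm i) x
    rw [LinearMap.comp_apply, h0, map_zero, LinearMap.comp_apply] at h1
    exact Subtype.ext (res.eq_zero_of_d_eq_zero (n := n + i)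
      (ih (h1.symm.trans (map_zero _).symm)) hx)

/-- The generating pieces of `P^{n+i}` and `P^i` eventually have the same dimension, so the
liftings above an injective one are eventually bijective. -/
lemma eventually_bijective_lifting (hK : IsKoszulAlgebra k R 𝒜) {n : ℕ}
    {η : res.P n →ₗ[R] M} {l : ∀ i, res.P (n + i) →ₗ[R] res.P i} (hl : res.IsLifting n η l)
    (hdeg : res.LiftingEntriesInDegreeZero n l) {j : ℕ} (hj : Function.Injective (l j)) :
    ∃ I, ∀ i, I ≤ i → Function.Bijective (l i) := by
  have := hK.isSemisimpleRing
  have := hK.finite_gradeZero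
  have hdeg' (i : ℕ) : IsHom (res.grading (n + i)) (res.grading i) (-(n : ℤ)) (l i) := by
    intro a x hx
    rw [← sub_eq_add_neg]
    exact hdeg i hx
  have hinj := res.injective_lifting_of_le hl hdeg' hj
  have hs (i : ℕ) : ((n + i : ℕ) : ℤ) + -(n : ℤ) = (i : ℕ) := by push_cast; ring
  let V (i : ℕ) := (res.grading i).pieceZero i
  have hfin (i : ℕ) : Module.Finite k (V i) := by
    have := res.finite i
    have := (res.grading i).finite_pieceZero (res.vanish i)
    exact Module.Finite.trans (gradeZeroSubalgebra k R 𝒜) (V i)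
  let f (i : ℕ) : V (n + i) →ₗ[k] V i := ((hdeg' i).onPiece (hs i)).restrictScalars k
  have hf (i : ℕ) (hi : j ≤ i) : Function.Injective (f i) := fun x y hxy =>
    Subtype.ext (hinj i hi (congrArg Subtype.val hxy))
  obtain ⟨I, hjI, hI⟩ := eventually_shift_eq (D := fun i => Module.finrank k (V i)) (n := n)
    (j := j) fun i hi => LinearMap.finrank_le_finrank_of_injective (hf i hi)
  refine ⟨I, fun i hi => ⟨hinj i (hjI.trans hi), ?_⟩⟩
  refine (hdeg' i).surjective_of_onPiece (res.generatedIn i) (hs i) ?_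
  exact (LinearMap.injective_iff_surjective_of_finrank_eq_finrank (hI i hi)).mp
    (hf i (hjI.trans hi))

lemma hasBijectiveLifting_of_hasInjectiveLifting (hK : IsKoszulAlgebra k R 𝒜)
    (h : res.HasDiagonalClassWithInjectiveLifting) :
    res.HasDiagonalClassWithBijectiveLifting := by
  obtain ⟨n, hn, η, hη, hd, l, hl, hdeg, j, hj⟩ := h
  obtain ⟨I, hI⟩ := res.eventually_bijective_lifting hK hl hdeg hj
  exact ⟨n, hn, η, hη, hd, l, hl, hdeg, I, hI I le_rfl⟩

lemma hasInjectiveLifting_of_hasBijectiveLifting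
    (h : res.HasDiagonalClassWithBijectiveLifting) :
    res.HasDiagonalClassWithInjectiveLifting := by
  obtain ⟨n, hn, η, hη, hd, l, hl, hdeg, j, hj⟩ := h
  exact ⟨n, hn, η, hη, hd, l, hl, hdeg, j, hj.1⟩

lemma isEventuallyPeriodic_of_hasInjectiveLifting (hK : IsKoszulAlgebra k R 𝒜)
    (h : res.HasDiagonalClassWithInjectiveLifting) : res.IsEventuallyPeriodicModule := by
  obtain ⟨n, hn, η, hη, hd, l, hl, hdeg, j, hj⟩ := h
  obtain ⟨I, hI⟩ := res.eventually_bijective_lifting hK hl hdeg hj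
  refine ⟨I, n - 1, ?_⟩
  rw [show I + (n - 1) + 1 = n + I by omega]
  let e := LinearEquiv.ofBijective (l I) (hI I le_rfl)
  have he : (LinearMap.range (res.d (n + I))).map e.toLinearMap = LinearMap.range (res.d I) := by
    change (LinearMap.range (res.d (n + I))).map (l I) = _
    rw [← LinearMap.range_comp, ← hl.lift_comm, LinearMap.range_comp_of_range_eq_top]
    exact LinearMap.range_eq_top.mpr (hI (I + 1) (by omega)).2
  exact ⟨(e.submoduleMap _).trans (LinearEquiv.ofEq _ _ he)⟩

/-! ### The selfinjective case -/

lemma injective_P (hR : Module.Injective R R) (n : ℕ) : Module.Injective R (res.P n) := by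
  have := res.projective n
  have := res.finite n
  obtain ⟨m, f, g, -, -, hfg⟩ := Module.Finite.exists_comp_eq_id_of_projective R (res.P n)
  have hpi : Module.Injective R (Fin m → R) := inferInstance
  refine ⟨fun X Y _ _ _ _ i hi φ => ?_⟩
  obtain ⟨h, hh⟩ := hpi.out i hi (g ∘ₗ φ)
  refine ⟨f ∘ₗ h, fun x => ?_⟩
  rw [LinearMap.comp_apply, hh]
  exact LinearMap.congr_fun hfg (φ x)

/-- Over a selfinjective algebra, a degree zero endomorphism of `P^p`, `p ≥ 1`, that is the
identity on boundaries is the identity: the difference extends to a degree zero map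
`P^{p-1} → P^p`, which must vanish on the generators of `P^{p-1}`. -/
lemma endo_eq_id (hR : Module.Injective R R) {p : ℕ} (hp : 1 ≤ p) {E : res.P p →ₗ[R] res.P p}
    (hE : IsHom (res.grading p) (res.grading p) 0 E) (h : E ∘ₗ res.d p = res.d p) :
    E = LinearMap.id := by
  obtain ⟨m, rfl⟩ := Nat.exists_eq_add_of_le' hp
  have hker : LinearMap.ker (res.d m) ≤ LinearMap.ker (E - LinearMap.id) := by
    rw [res.exact_succ]
    rintro _ ⟨x, rfl⟩
    have := LinearMap.congr_fun h x
    rw [LinearMap.comp_apply] at this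
    simp [this]
  obtain ⟨c, hc, hcd⟩ := exists_homogeneous_extension (res.injective_P hR (m + 1)) (s := 0)
    (res.d_isHom m) (hE.sub isHom_id) (by simp) hker
  have hc0 : c = 0 := (res.generatedIn m).hom_ext fun x hx => by
    have := hc hx
    rwa [add_zero, res.vanish (m + 1) m (by push_cast; omega), Submodule.mem_bot] at this
  rw [hc0, LinearMap.zero_comp] at hcd
  exact (sub_eq_zero.mp hcd.symm)

/-- `P^{n+i}` is a graded direct summand of `P^i` (up to the shift by `n`), through maps which
respect the boundaries and so induce maps between the syzygies. -/
structure IsSplitAt (n i : ℕ) (F : res.P i →ₗ[R] res.P (n + i))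
    (G : res.P (n + i) →ₗ[R] res.P i) : Prop where
  isHom_F : IsHom (res.grading i) (res.grading (n + i)) n F
  isHom_G : IsHom (res.grading (n + i)) (res.grading i) (-(n : ℤ)) G
  comp_eq : F ∘ₗ G = LinearMap.id
  range_F : ∀ x, F (res.d i x) ∈ LinearMap.range (res.d (n + i))
  range_G : ∀ x, G (res.d (n + i) x) ∈ LinearMap.range (res.d i)

/-- An isomorphism of syzygies extends, after passing to leading components, to a splitting
of projectives. -/
lemma exists_isSplitAt_of_equiv (hR : Module.Injective R R) {n s : ℕ} (hn : 1 ≤ n)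
    (φ : LinearMap.range (res.d (n + s)) ≃ₗ[R] LinearMap.range (res.d s)) :
    ∃ F G, res.IsSplitAt n s F G := by
  have := res.projective (s + 1)
  have := res.projective (n + s + 1)
  obtain ⟨F, hF⟩ := exists_extension_of_injective (res.injective_P hR (n + s)) (g := res.d s)
    (f := (LinearMap.range (res.d (n + s))).subtype ∘ₗ φ.symm.toLinearMap ∘ₗ
      (res.d s).rangeRestrict) fun x hx => by
        have : (res.d s).rangeRestrict x = 0 := Subtype.ext hx
        simp [this]
  obtain ⟨G, hG⟩ := exists_extension_of_injective (res.injective_P hR s) (g := res.d (n + s))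
    (f := (LinearMap.range (res.d s)).subtype ∘ₗ φ.toLinearMap ∘ₗ
      (res.d (n + s)).rangeRestrict) fun x hx => by
        have : (res.d (n + s)).rangeRestrict x = 0 := Subtype.ext hx
        simp [this]
  have hF' (y : LinearMap.range (res.d s)) : F y = φ.symm y := by
    obtain ⟨_, x, rfl⟩ := y
    exact LinearMap.congr_fun hF x
  have hG' (x) : G (res.d (n + s) x) = φ ((res.d (n + s)).rangeRestrict x) :=
    LinearMap.congr_fun hG x
  obtain ⟨H, hH⟩ := exists_lift_of_projective (g := res.d (n + s)) (f := F ∘ₗ res.d s) (by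
    rw [hF]; rintro _ ⟨x, rfl⟩; exact Subtype.coe_prop _)
  obtain ⟨H', hH'⟩ := exists_lift_of_projective (g := res.d s) (f := G ∘ₗ res.d (n + s)) (by
    rw [hG]; rintro _ ⟨x, rfl⟩; exact Subtype.coe_prop _)
  have hFG : (F ∘ₗ G) ∘ₗ res.d (n + s) = res.d (n + s) := by
    ext x
    rw [LinearMap.comp_apply, LinearMap.comp_apply, hG', hF', LinearEquiv.symm_apply_apply]
    rfl
  have e : comp (res.grading (n + s)) (res.grading (n + s)) 0 (F ∘ₗ G) =
      comp (res.grading s) (res.grading (n + s)) n F ∘ₗ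
        comp (res.grading (n + s)) (res.grading s) (-(n : ℤ)) G :=
    (res.generatedIn (n + s)).comp_comp (res.generatedIn s) (res.vanish (n + s)) F G
      (by push_cast; ring) (by push_cast; ring) (by simp)
  refine ⟨comp (res.grading s) (res.grading (n + s)) n F,
    comp (res.grading (n + s)) (res.grading s) (-(n : ℤ)) G,
    comp_isHom _ _ _ _, comp_isHom _ _ _ _, ?_, fun x => ?_, fun x => ?_⟩
  · rw [← e]
    refine res.endo_eq_id hR (by omega) (comp_isHom _ _ _ _) ?_
    rw [← (res.d_isHom (n + s)).right_comp (u := 0) _ (by simp), hFG, (res.d_isHom (n + s)).comp_eq]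
  · have e1 := (res.d_isHom s).right_comp (𝓒 := res.grading (n + s)) (t := n) (u := n) F (by simp)
    have e2 := (res.d_isHom (n + s)).left_comp (𝓐 := res.grading (s + 1)) (s := n) (u := n) H
      (by simp)
    rw [hH, e1] at e2
    exact ⟨_, (LinearMap.congr_fun e2 x).symm⟩
  · have e1 := (res.d_isHom (n + s)).right_comp (𝓒 := res.grading s) (t := -(n : ℤ))
      (u := -(n : ℤ)) G (by simp)
    have e2 := (res.d_isHom s).left_comp (𝓐 := res.grading (n + s + 1)) (s := -(n : ℤ))
      (u := -(n : ℤ)) H' (by simp)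
    rw [hH', e1] at e2
    exact ⟨_, (LinearMap.congr_fun e2 x).symm⟩

/-- Splittings descend along the resolution, by injectivity of the projectives. -/
lemma IsSplitAt.descend (hR : Module.Injective R R) {n i : ℕ} (hn : 1 ≤ n)
    {F : res.P (i + 1) →ₗ[R] res.P (n + (i + 1))} {G : res.P (n + (i + 1)) →ₗ[R] res.P (i + 1)}
    (h : res.IsSplitAt n (i + 1) F G) : ∃ F' G', res.IsSplitAt n i F' G' := by
  have kF : LinearMap.ker (res.d i) ≤ LinearMap.ker (res.d (n + i) ∘ₗ F) := by
    rw [res.exact_succ]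
    rintro _ ⟨x, rfl⟩
    obtain ⟨y, hy⟩ := h.range_F x
    rw [LinearMap.mem_ker, LinearMap.comp_apply, ← hy]
    exact res.d_comp_d (n + i) y
  have kG : LinearMap.ker (res.d (n + i)) ≤ LinearMap.ker (res.d i ∘ₗ G) := by
    rw [res.exact_succ]
    rintro _ ⟨x, rfl⟩
    obtain ⟨y, hy⟩ := h.range_G x
    rw [LinearMap.mem_ker, LinearMap.comp_apply]
    exact (congrArg (res.d i) hy.symm).trans (res.d_comp_d i y)
  obtain ⟨F', hF', eF⟩ := exists_homogeneous_extension (res.injective_P hR (n + i)) (s := (n : ℤ))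
    (res.d_isHom i) ((res.d_isHom (n + i)).trans h.isHom_F rfl) (by simp) kF
  obtain ⟨G', hG', eG⟩ := exists_homogeneous_extension (res.injective_P hR i) (s := -(n : ℤ))
    (res.d_isHom (n + i)) ((res.d_isHom i).trans h.isHom_G rfl) (by simp) kG
  refine ⟨F', G', hF', hG', ?_, fun x => ⟨F x, (LinearMap.congr_fun eF x).symm⟩,
    fun x => ⟨G x, (LinearMap.congr_fun eG x).symm⟩⟩
  refine res.endo_eq_id hR (by omega) (hF'.trans hG' (by simp)) ?_
  rw [LinearMap.comp_assoc, eG, ← LinearMap.comp_assoc, eF, LinearMap.comp_assoc]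
  exact (congrArg (res.d (n + i) ∘ₗ ·) h.comp_eq).trans (LinearMap.comp_id _)

lemma nontrivial_range_d (hinf : ∀ i, Nontrivial (res.P i)) (t : ℕ) :
    Nontrivial (LinearMap.range (res.d t)) := by
  by_contra hcon
  rw [not_nontrivial_iff_subsingleton] at hcon
  have hz (x) : res.d t x = 0 := congrArg Subtype.val
    (Subsingleton.elim ((res.d t).rangeRestrict x) 0)
  have : (LinearMap.id : res.P (t + 1) →ₗ[R] res.P (t + 1)) = 0 :=
    (res.generatedIn (t + 1)).hom_ext fun x hx => res.eq_zero_of_d_eq_zero (hz x) hx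
  obtain ⟨x, hx⟩ := @exists_ne _ (hinf (t + 1)) (0 : res.P (t + 1))
  exact hx (LinearMap.congr_fun this x)

lemma isPeriodic_of_isEventuallyPeriodic (hR : Module.Injective R R)
    (hind : IsIndecomposableModule R M) (hinf : ∀ i, Nontrivial (res.P i))
    (h : res.IsEventuallyPeriodicModule) : res.IsPeriodicModule := by
  obtain ⟨s, t, hφ⟩ := h
  rw [show s + t + 1 = t + 1 + s by omega] at hφ
  obtain ⟨φ⟩ := hφ
  have hdown (i : ℕ) : (∃ F G, res.IsSplitAt (t + 1) i F G) →
      ∃ F G, res.IsSplitAt (t + 1) 0 F G := by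
    induction i with
    | zero => exact id
    | succ i ih =>
      rintro ⟨F, G, hFG⟩
      exact ih (hFG.descend res hR (by omega))
  obtain ⟨F, G, hFG⟩ := hdown s (res.exists_isSplitAt_of_equiv hR (by omega) φ)
  change res.P 0 →ₗ[R] res.P (t + 1) at F
  change res.P (t + 1) →ₗ[R] res.P 0 at G
  let δ := (res.d t).rangeRestrict
  -- The maps induced by `F` and `G` between `M` and `Ω^{t+1} M`.
  let f : M →ₗ[R] LinearMap.range (res.d t) :=
    (LinearMap.ker res.augment).liftQ (δ ∘ₗ F) (by
      rw [res.exact_zero]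
      rintro _ ⟨x, rfl⟩
      obtain ⟨y, hy⟩ := hFG.range_F x
      refine Subtype.ext ?_
      exact (congrArg (res.d t) hy.symm).trans (res.d_comp_d t y)) ∘ₗ
    (res.augment.quotKerEquivOfSurjective res.augment_surjective).symm.toLinearMap
  have hf (x) : f (res.augment x) = δ (F x) := by
    have : (res.augment.quotKerEquivOfSurjective res.augment_surjective).symm (res.augment x) =
        (LinearMap.ker res.augment).mkQ x := by
      rw [LinearEquiv.symm_apply_eq]; rfl
    simp only [f, LinearMap.comp_apply, LinearEquiv.coe_coe, this]
    rfl
  let g : LinearMap.range (res.d t) →ₗ[R] M :=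
    (LinearMap.ker (res.d t)).liftQ (res.augment ∘ₗ G) (by
      rw [res.exact_succ]
      rintro _ ⟨x, rfl⟩
      obtain ⟨y, hy⟩ := hFG.range_G x
      exact (congrArg res.augment hy.symm).trans (res.augment_comp_d y)) ∘ₗ
    (res.d t).quotKerEquivRange.symm.toLinearMap
  have hg (x) : g (δ x) = res.augment (G x) := by
    have : (res.d t).quotKerEquivRange.symm (δ x) = (LinearMap.ker (res.d t)).mkQ x := by
      rw [LinearEquiv.symm_apply_eq]; rfl
    simp only [g, LinearMap.comp_apply, LinearEquiv.coe_coe, this]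
    rfl
  have hfg (y) : f (g y) = y := by
    obtain ⟨x, rfl⟩ := (res.d t).surjective_rangeRestrict y
    exact (congrArg f (hg x)).trans ((hf (G x)).trans
      (congrArg δ (LinearMap.congr_fun hFG.comp_eq x)))
  have hcompl : IsCompl (LinearMap.range g) (LinearMap.ker f) := by
    constructor
    · rw [Submodule.disjoint_def]
      rintro _ ⟨y, rfl⟩ hy
      rw [LinearMap.mem_ker, hfg] at hy
      rw [hy, map_zero]
    · rw [codisjoint_iff, eq_top_iff]
      intro x _
      refine Submodule.mem_sup.mpr ⟨g (f x), ⟨_, rfl⟩, x - g (f x), ?_, by abel⟩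
      rw [LinearMap.mem_ker, map_sub, hfg, sub_self]
  have hg_inj : Function.Injective g := Function.LeftInverse.injective hfg
  refine ⟨t, ⟨LinearEquiv.ofBijective g ⟨hg_inj, ?_⟩⟩⟩
  rcases hind.2 _ _ hcompl with h0 | h0
  · have := res.nontrivial_range_d hinf t
    obtain ⟨y, hy⟩ := exists_ne (0 : LinearMap.range (res.d t))
    refine absurd (hg_inj ?_) hy
    rw [LinearMap.range_eq_bot.mp h0]
    rfl
  · rw [← LinearMap.range_eq_top, ← sup_bot_eq (LinearMap.range g), ← h0]
    exact hcompl.sup_eq_top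

end LinearResolution

/-- **Theorem 4.13.** Let `R` be a Koszul algebra over a field `k` and let `M` be an
indecomposable linear `R`-module of infinite projective dimension, with minimal linear
resolution `res`.  Consider the statements: (1) `M` is periodic; (2) there exist `n ≥ 1`
and `η ∈ Δ_M^n` such that some lifting of `η` (with entries in `R₀`) is an isomorphism;
(3) there exist `n ≥ 1` and `η ∈ Δ_M^n` such that some lifting of `η` is a monomorphism;
(4) `M` is eventually periodic.  Then (1) ⟹ (2), (2) ⟺ (3) and (3) ⟹ (4).  Moreover,
if `R` is selfinjective, then (1)–(4) are all equivalent. -/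
theorem periodicity_characterization_by_diagonal_liftings
    {k R : Type} [Field k] [Ring R] [Algebra k R] {𝒜 : ℕ → Submodule k R}
    [GradedAlgebra 𝒜] (hKoszul : IsKoszulAlgebra k R 𝒜)
    {M : Type} [AddCommGroup M] [Module R M] [Module k M] [IsScalarTower k R M]
    {ℳ : ModuleGrading k R 𝒜 M}
    (hgen : Submodule.span R ((ℳ.piece 0 : Set M)) = ⊤)
    (hvanish : ∀ j : ℤ, j < 0 → ℳ.piece j = ⊥)
    (hind : IsIndecomposableModule R M)
    (res : LinearResolution k R 𝒜 M ℳ)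
    (hinfdim : ∀ i, Nontrivial (res.P i)) :
    (res.IsPeriodicModule → res.HasDiagonalClassWithBijectiveLifting) ∧
    (res.HasDiagonalClassWithBijectiveLifting ↔
      res.HasDiagonalClassWithInjectiveLifting) ∧
    (res.HasDiagonalClassWithInjectiveLifting → res.IsEventuallyPeriodicModule) ∧
    (Module.Injective R R →
      ((res.IsPeriodicModule ↔ res.HasDiagonalClassWithBijectiveLifting) ∧
       (res.HasDiagonalClassWithBijectiveLifting ↔
         res.HasDiagonalClassWithInjectiveLifting) ∧
       (res.HasDiagonalClassWithInjectiveLifting ↔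
         res.IsEventuallyPeriodicModule))) := by
  have h12 := res.hasBijectiveLifting_of_isPeriodic
  have h23 := res.hasInjectiveLifting_of_hasBijectiveLifting
  have h32 := res.hasBijectiveLifting_of_hasInjectiveLifting hKoszul
  have h34 := res.isEventuallyPeriodic_of_hasInjectiveLifting hKoszul
  refine ⟨h12, ⟨h23, h32⟩, h34, fun hR => ?_⟩
  have h41 := res.isPeriodic_of_isEventuallyPeriodic hR hind hinfdim
  exact ⟨⟨h12, fun h => h41 (h34 (h23 h))⟩, ⟨h23, h32⟩, ⟨h34, fun h => h23 (h12 (h41 h))⟩⟩
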